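/- Fix integers k ≥ s ≥ 1, probability distributions p_1, …, p_k on Y, and R ∈ ℕ. Let q be the consensus-sampling output distribution on Y ∪ {⊥}, given by q(⊥) = (1 − Z)^R and q(y) = (1 − (1 − Z)^R)·g(y)/Z for y ∈ Y when Z > 0, and by the point mass at ⊥ when Z = 0. Then q is Pareto optimal with respect to abstention and worst-case robustness: every probability distribution ν on Y ∪ {⊥} with ν(⊥) ≤ q(⊥) and R_ν ≤ R_q must equal q. Equivalently, for every ν ≠ q, either q(⊥) < ν(⊥) or R_q < R_ν. -/

import Mathlib

/-!
Write `q` for the consensus-sampling distribution and `g` for the minimal `s`-average `gmin s p`.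
On `Y` we have `q = c · g` for a constant `c ≥ 0` with `c · Z = 1 - (1 - Z) ^ R`, and `g` is at most
every `s`-average, so the worst-case robustness of `q` is at most `c`. Hence any competitor `ν` that
is no less robust satisfies `ν y ≤ c * avg_T y` for every `T` of size `s`; choosing a `T` that attains
the minimum gives `ν y ≤ c * g y = q y`. Together with `ν ⊥ ≤ q ⊥` this is a pointwise inequality
`ν ≤ q` between two families with total mass one, which forces equality.
-/

open scoped BigOperators ENNReal

/-- `p` is a probability distribution: nonnegative and summing to 1. -/
def IsDist {α : Type*} (p : α → ℝ) : Prop := (∀ a, 0 ≤ p a) ∧ HasSum p 1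

/-- `g(y) := min over T ⊆ {1,…,k} with |T| = s of avg_T(y)`, the average of the `s`
smallest of the `k` values `p_1(y), …, p_k(y)`. -/
noncomputable def gmin {Y : Type*} {k : ℕ} (s : ℕ) (p : Fin k → Y → ℝ) (y : Y) : ℝ :=
  sInf {v : ℝ | ∃ T : Finset (Fin k), T.card = s ∧ v = (∑ i ∈ T, p i y) / s}

/-- The consensus-sampling output distribution on `Y ∪ {⊥}` (with `⊥ = none`):
`q_R(⊥) = (1 − Z)^R` and `q_R(y) = (1 − (1 − Z)^R)·g(y)/Z` when `Z > 0`, and the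
point mass at `⊥` when `Z = 0`. -/
noncomputable def consensusOut {Y : Type*} (g : Y → ℝ) (Z : ℝ) (R : ℕ) : Option Y → ℝ
  | none => (1 - Z) ^ R
  | some y => if 0 < Z then (1 - (1 - Z) ^ R) * g y / Z else 0

/-- worst-case robustness `R_q := sup_{y, |T| = s} q(y)/avg_T(y)`, computed in `[0,∞]`
(so `0/0 = 0` and `c/0 = ∞` for `c > 0`). -/
noncomputable def worstRob {Y : Type*} {k : ℕ} (s : ℕ) (p : Fin k → Y → ℝ) (q : Y → ℝ) :
    ℝ≥0∞ :=
  ⨆ (y : Y) (T : Finset (Fin k)) (_ : T.card = s),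
    ENNReal.ofReal (q y) / ENNReal.ofReal ((∑ i ∈ T, p i y) / s)

/-- The infimum defining `gmin` is attained. -/
lemma exists_gmin_eq {Y : Type*} {k s : ℕ} (hsk : s ≤ k) (p : Fin k → Y → ℝ) (y : Y) :
    ∃ T : Finset (Fin k), T.card = s ∧ gmin s p y = (∑ i ∈ T, p i y) / s := by
  obtain ⟨T, -, hT⟩ := Finset.exists_subset_card_eq
    (s := (Finset.univ : Finset (Fin k))) (n := s) (by simpa using hsk)
  have hfin : {v : ℝ | ∃ T : Finset (Fin k), T.card = s ∧ v = (∑ i ∈ T, p i y) / s}.Finite := by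
    refine (Set.finite_range fun T : Finset (Fin k) => (∑ i ∈ T, p i y) / s).subset ?_
    rintro v ⟨T, -, rfl⟩
    exact ⟨T, rfl⟩
  have hne : {v : ℝ | ∃ T : Finset (Fin k), T.card = s ∧ v = (∑ i ∈ T, p i y) / s}.Nonempty :=
    ⟨_, T, hT, rfl⟩
  exact hne.csInf_mem hfin

lemma gmin_le {Y : Type*} {k s : ℕ} {p : Fin k → Y → ℝ} (hp : ∀ i, IsDist (p i)) (y : Y)
    {T : Finset (Fin k)} (hT : T.card = s) : gmin s p y ≤ (∑ i ∈ T, p i y) / s := by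
  refine csInf_le ⟨0, ?_⟩ ⟨T, hT, rfl⟩
  rintro v ⟨T, -, rfl⟩
  exact div_nonneg (Finset.sum_nonneg fun i _ => (hp i).1 y) (Nat.cast_nonneg _)

lemma gmin_nonneg {Y : Type*} {k s : ℕ} (hsk : s ≤ k) {p : Fin k → Y → ℝ}
    (hp : ∀ i, IsDist (p i)) (y : Y) : 0 ≤ gmin s p y := by
  obtain ⟨T, -, h⟩ := exists_gmin_eq hsk p y
  rw [h]
  exact div_nonneg (Finset.sum_nonneg fun i _ => (hp i).1 y) (Nat.cast_nonneg _)

lemma hasSum_avg {Y : Type*} {k s : ℕ} (hs1 : 1 ≤ s) {p : Fin k → Y → ℝ}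
    (hp : ∀ i, IsDist (p i)) {T : Finset (Fin k)} (hT : T.card = s) :
    HasSum (fun y => (∑ i ∈ T, p i y) / (s : ℝ)) 1 := by
  have h := (hasSum_sum (s := T) fun i _ => (hp i).2).div_const (s : ℝ)
  have hs : (s : ℝ) ≠ 0 := by positivity
  simpa [hT, hs] using h

lemma summable_gmin {Y : Type*} {k s : ℕ} (hs1 : 1 ≤ s) (hsk : s ≤ k) {p : Fin k → Y → ℝ}
    (hp : ∀ i, IsDist (p i)) : Summable (gmin s p) ∧ ∑' y, gmin s p y ≤ 1 := by
  obtain ⟨T, -, hT⟩ := Finset.exists_subset_card_eq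
    (s := (Finset.univ : Finset (Fin k))) (n := s) (by simpa using hsk)
  have havg := hasSum_avg hs1 hp hT
  have hsum : Summable (gmin s p) :=
    Summable.of_nonneg_of_le (gmin_nonneg hsk hp) (fun y => gmin_le hp y hT) havg.summable
  exact ⟨hsum, hasSum_le (fun y => gmin_le hp y hT) hsum.hasSum havg⟩

lemma hasSum_option {Y : Type*} {f : Option Y → ℝ} {a : ℝ}
    (h : HasSum (fun y => f (some y)) a) : HasSum f (f none + a) := by
  have h1 : HasSum (f ∘ ((↑) : Set.range (some : Y → Option Y) → Option Y)) a :=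
    (Option.some_injective Y).hasSum_range_iff.2 h
  have h2 : HasSum (f ∘ ((↑) : ({none} : Set (Option Y)) → Option Y)) (f none) := by
    simpa using hasSum_unique (f ∘ ((↑) : ({none} : Set (Option Y)) → Option Y))
  exact h2.add_isCompl (Set.isCompl_range_some_none Y).symm h1

/-- The output of consensus sampling is a scaled copy of `g` on `Y`; the scaling factor `c`
is chosen to be `0` when `Z = 0`, so that `c * Z = 1 - (1 - Z) ^ R` holds in every case. -/
lemma exists_scale {Y : Type*} (g : Y → ℝ) {Z : ℝ} (hZ0 : 0 ≤ Z) (hZ1 : Z ≤ 1) (R : ℕ) :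
    ∃ c : ℝ, 0 ≤ c ∧ c * Z = 1 - (1 - Z) ^ R ∧
      ∀ y, consensusOut g Z R (some y) = c * g y := by
  rcases hZ0.eq_or_lt with rfl | hZ
  · exact ⟨0, le_rfl, by simp, fun y => by simp [consensusOut]⟩
  · have hpow : (1 - Z) ^ R ≤ 1 := pow_le_one₀ (by linarith) (by linarith)
    refine ⟨(1 - (1 - Z) ^ R) / Z, div_nonneg (by linarith) hZ0, by field_simp, fun y => ?_⟩
    simp only [consensusOut, if_pos hZ]
    ring

/-- **Pareto optimality of consensus sampling.** Every probability distribution `ν` on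
`Y ∪ {⊥}` that abstains no more than the consensus-sampling output distribution `q` and has
worst-case robustness no larger than that of `q` must equal `q`. -/
theorem consensus_pareto_optimal
    {Y : Type*} [Countable Y] [Nonempty Y]
    (k s : ℕ) (hs1 : 1 ≤ s) (hsk : s ≤ k)
    (p : Fin k → Y → ℝ) (hp : ∀ i, IsDist (p i)) (R : ℕ)
    (ν : Option Y → ℝ) (hν : IsDist ν)
    (habs : ν none ≤ consensusOut (gmin s p) (∑' y, gmin s p y) R none)
    (hrob : worstRob s p (fun y => ν (some y))
        ≤ worstRob s p (fun y => consensusOut (gmin s p) (∑' y', gmin s p y') R (some y))) :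
    ν = consensusOut (gmin s p) (∑' y, gmin s p y) R := by
  obtain ⟨hsum, hZ1⟩ := summable_gmin hs1 hsk hp
  obtain ⟨c, hc, hcZ, hq⟩ :=
    exists_scale (gmin s p) (tsum_nonneg (gmin_nonneg hsk hp)) hZ1 R
  set q := consensusOut (gmin s p) (∑' y, gmin s p y) R
  have hqrob : worstRob s p (fun y => q (some y)) ≤ ENNReal.ofReal c := by
    refine iSup_le fun y => iSup_le fun T => iSup_le fun hT => ENNReal.div_le_of_le_mul ?_
    beta_reduce
    rw [← ENNReal.ofReal_mul hc, hq]
    exact ENNReal.ofReal_le_ofReal (mul_le_mul_of_nonneg_left (gmin_le hp y hT) hc)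
  have hle : ∀ o, ν o ≤ q o := by
    rintro (_ | y)
    · exact habs
    · obtain ⟨T, hT, hTg⟩ := exists_gmin_eq hsk p y
      have h1 : ENNReal.ofReal (ν (some y)) / ENNReal.ofReal ((∑ i ∈ T, p i y) / s)
          ≤ ENNReal.ofReal c :=
        le_trans (b := worstRob s p fun y => ν (some y))
          (le_iSup_of_le y <| le_iSup_of_le T <|
            le_iSup (fun _ : T.card = s => ENNReal.ofReal (ν (some y)) /
              ENNReal.ofReal ((∑ i ∈ T, p i y) / s)) hT)
          (hrob.trans hqrob)
      -- Finiteness of the bound `c` covers the case where the average vanishes.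
      rw [ENNReal.div_le_iff_le_mul (Or.inr ENNReal.ofReal_ne_top) (Or.inl ENNReal.ofReal_ne_top),
        ← ENNReal.ofReal_mul hc, ← hTg,
        ENNReal.ofReal_le_ofReal_iff (mul_nonneg hc (gmin_nonneg hsk hp y))] at h1
      rwa [hq]
  have hqsum : HasSum q 1 := by
    have h : HasSum (fun y => q (some y)) (c * ∑' y, gmin s p y) := by
      simpa only [hq] using hsum.hasSum.mul_left c
    have hnone : q none = (1 - ∑' y, gmin s p y) ^ R := rfl
    have h' := hasSum_option h
    rwa [hcZ, hnone, add_sub_cancel] at h'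
  have hdiff : HasSum (fun o => q o - ν o) 0 := by simpa using hqsum.sub hν.2
  have hzero := (hasSum_zero_iff_of_nonneg fun o => sub_nonneg.2 (hle o)).1 hdiff
  funext o
  have := congrFun hzero o
  simp only [Pi.zero_apply] at this
  linarith
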